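/- Let (G,c,o) be an infinite rooted network admitting a potential h which tends to infinity. Then the network is recurrent. (Proof: h(X_{n∧τ_o}) is a nonnegative martingale, hence converges almost surely, contradicting transience if h→∞.) -/

import Mathlib

open scoped ENNReal
open Filter Topology Classical
noncomputable section

/-- A rooted network: a connected, locally finite simple graph with positive
symmetric edge conductances (extended by `0` to non-edges) and a root `o`. -/
structure RootedNetwork (V : Type*) where
  G : SimpleGraph V
  locallyFinite : ∀ x : V, (G.neighborSet x).Finite
  connected : G.Connected
  c : V → V → ℝ
  c_symm : ∀ x y, c x y = c y x
  c_pos : ∀ x y, G.Adj x y → 0 < c x y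
  c_eq_zero : ∀ x y, ¬ G.Adj x y → c x y = 0
  o : V

namespace RootedNetwork

variable {V : Type*}

/-- The vertex weight `c_x = Σ_{z ∼ x} c_{xz}`. -/
noncomputable def cv (N : RootedNetwork V) (x : V) : ℝ := ∑' y, N.c x y

/-- The transition probability `p(x,y) = c_{xy} / c_x` of the network random walk. -/
noncomputable def p (N : RootedNetwork V) (x y : V) : ℝ≥0∞ :=
  ENNReal.ofReal (N.c x y / N.cv x)

/-- The probability that the network random walk started at `x` begins with the
given finite sequence of steps. -/
noncomputable def pathProb (N : RootedNetwork V) : V → List V → ℝ≥0∞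
  | _, [] => 1
  | x, y :: l => N.p x y * pathProb N y l

/-- The probability, starting from `x`, that the walk ever visits `b`
(`P_x(τ_b < ∞)`), computed by decomposing over the finite path up to the first
visit of `b`. -/
noncomputable def hitProb (N : RootedNetwork V) (x b : V) : ℝ≥0∞ :=
  if x = b then 1
  else ∑' l : {l : List V // l.getLast? = some b ∧ b ∉ l.dropLast}, N.pathProb x l.1

/-- A rooted network is recurrent if the walk started from any vertex almost
surely visits the root `o`. -/
def Recurrent (N : RootedNetwork V) : Prop := ∀ x : V, N.hitProb x N.o = 1

/-- The Green kernel `G_o(x,y) = Σ_{n ≥ 0} P_x(X_n = y, τ_o > n)` of the walk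
killed at the root, computed as a sum over finite paths from `x` to `y`
avoiding `o` (the `n = 0` term is the first summand). -/
noncomputable def GreenKer (N : RootedNetwork V) (x y : V) : ℝ≥0∞ :=
  (if x = y ∧ x ≠ N.o then 1 else 0) +
    ∑' l : {l : List V // l.getLast? = some y ∧ N.o ∉ x :: l}, N.pathProb x l.1

/-- The Green density `g_o(x,y) = G_o(x,y) / c_y`. -/
noncomputable def greenDensity (N : RootedNetwork V) (x y : V) : ℝ≥0∞ :=
  N.GreenKer x y / ENNReal.ofReal (N.cv y)

/-- The network Laplacian `Δ f (v) = Σ_{x ∼ v} c_{vx} (f(x) - f(v))`. -/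
noncomputable def lap (N : RootedNetwork V) (f : V → ℝ) (v : V) : ℝ :=
  ∑' x, N.c v x * (f x - f v)

/-- A potential: a nonnegative function vanishing at `o`, with Laplacian `1`
at `o`, harmonic everywhere else. -/
def IsPotential (N : RootedNetwork V) (h : V → ℝ) : Prop :=
  (∀ v, 0 ≤ h v) ∧ h N.o = 0 ∧ N.lap h N.o = 1 ∧ ∀ v, v ≠ N.o → N.lap h v = 0

end RootedNetwork
namespace RootedNetwork

variable {V : Type*}

def aux (N : RootedNetwork V) (φ : ℕ → ℝ≥0∞) (x : V) : ℝ≥0∞ :=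
  ∑' l : List V, if (l.getLast? = some N.o ∧ N.o ∉ l.dropLast) then φ l.length * N.pathProb x l else 0

def listEquiv (V : Type*) : Unit ⊕ (V × List V) ≃ List V where
  toFun := fun a => match a with
    | .inl _ => []
    | .inr (y, l) => y :: l
  invFun := fun l => match l with
    | [] => .inl ()
    | y :: l => .inr (y, l)
  left_inv := by rintro (_ | ⟨y, l⟩) <;> rfl
  right_inv := by rintro (_ | ⟨y, l⟩) <;> rfl

lemma tsum_list (f : List V → ℝ≥0∞) : ∑' l, f l = f [] + ∑' y, ∑' l, f (y :: l) := by
  rw [← (listEquiv V).tsum_eq f, ← ENNReal.tsum_prod]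
  refine HasSum.tsum_eq (HasSum.sum ?_ ?_)
  · exact hasSum_unique _
  · exact ENNReal.summable.hasSum

lemma aux_rec (N : RootedNetwork V) (φ : ℕ → ℝ≥0∞) (x : V) :
    N.aux φ x = ∑' y, N.p x y * (if y = N.o then φ 1 else N.aux (fun n => φ (n+1)) y) := by
  rw [aux, tsum_list]
  simp only [List.getLast?_nil, reduceCtorEq, false_and, if_false, zero_add]
  congr 1
  funext y
  split_ifs with hy
  · rw [tsum_list]
    subst hy
    simp [pathProb]
    rw [mul_comm]
  · rw [aux, ← ENNReal.tsum_mul_left]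
    congr 1
    funext l
    cases l with
    | nil => simp [hy]
    | cons z l =>
      simp only [List.getLast?_cons_cons, List.dropLast_cons_cons, List.mem_cons, pathProb,
        List.length_cons, Ne.symm hy, false_or]
      split_ifs <;> ring

lemma hit_eq (N : RootedNetwork V) (x : V) :
    N.hitProb x N.o = if x = N.o then 1 else N.aux (fun _ => 1) x := by
  rw [hitProb, aux]
  split_ifs
  · rfl
  · refine (tsum_subtype {l : List V | l.getLast? = some N.o ∧ N.o ∉ l.dropLast} (N.pathProb x)).trans ?_
    congr 1
    funext l
    simp [Set.indicator]

lemma hit_rec (N : RootedNetwork V) (x : V) (hx : x ≠ N.o) :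
    N.hitProb x N.o = ∑' y, N.p x y * N.hitProb y N.o := by
  rw [hit_eq, if_neg hx, aux_rec]
  simp only [hit_eq]

def nb (N : RootedNetwork V) (x : V) : Finset V := (N.locallyFinite x).toFinset

lemma mem_nb (N : RootedNetwork V) (x y : V) : y ∈ N.nb x ↔ N.G.Adj x y := by simp [nb]

lemma c_zero (N : RootedNetwork V) (x y : V) (h : y ∉ N.nb x) : N.c x y = 0 :=
  N.c_eq_zero x y (by rwa [mem_nb] at h)

lemma c_nonneg (N : RootedNetwork V) (x y : V) : 0 ≤ N.c x y := by
  by_cases h : N.G.Adj x y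
  · exact (N.c_pos x y h).le
  · exact (N.c_eq_zero x y h).ge

lemma cv_eq (N : RootedNetwork V) (x : V) : N.cv x = ∑ y ∈ N.nb x, N.c x y :=
  tsum_eq_sum fun y hy => N.c_zero x y hy

lemma cv_nonneg (N : RootedNetwork V) (x : V) : 0 ≤ N.cv x := by
  rw [cv_eq]; exact Finset.sum_nonneg fun y _ => N.c_nonneg x y

lemma cv_pos [Infinite V] (N : RootedNetwork V) (x : V) : 0 < N.cv x := by
  rw [cv_eq]
  obtain ⟨y, hy⟩ := N.connected.preconnected.exists_adj_of_nontrivial x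
  exact Finset.sum_pos (fun y hy => N.c_pos x y ((N.mem_nb x y).1 hy)) ⟨y, (N.mem_nb x y).2 hy⟩

lemma p_sum (N : RootedNetwork V) (f : V → ℝ≥0∞) (x : V) :
    ∑' y, N.p x y * f y = ∑ y ∈ N.nb x, N.p x y * f y :=
  tsum_eq_sum fun y hy => by simp [p, N.c_zero x y hy]

lemma p_total (N : RootedNetwork V) (x : V) : ∑' y, N.p x y ≤ 1 := by
  have := N.p_sum (fun _ => 1) x
  simp only [mul_one] at this
  rw [this]
  simp only [p]
  rw [← ENNReal.ofReal_sum_of_nonneg fun y _ => div_nonneg (N.c_nonneg x y) (N.cv_nonneg x),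
    ← Finset.sum_div, ← cv_eq]
  exact ENNReal.ofReal_le_one.2 (div_self_le_one _)

lemma aux_le (N : RootedNetwork V) (n : ℕ) (x : V) :
    N.aux (fun k => if k ≤ n then 1 else 0) x ≤ 1 := by
  induction n generalizing x with
  | zero =>
    rw [aux]
    refine le_trans (le_of_eq ?_) zero_le_one
    rw [ENNReal.tsum_eq_zero]
    intro l
    cases l <;> simp
  | succ n ih =>
    rw [aux_rec]
    refine le_trans (ENNReal.tsum_le_tsum fun y => ?_) (N.p_total x)
    refine mul_le_of_le_one_right' ?_
    split_ifs with h1 h2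
    · exact le_rfl
    · exact zero_le_one
    · simpa using ih y

lemma hit_le (N : RootedNetwork V) (x : V) : N.hitProb x N.o ≤ 1 := by
  rw [hit_eq]
  split_ifs
  · exact le_rfl
  · rw [aux, ENNReal.tsum_eq_iSup_sum]
    refine iSup_le fun s => ?_
    refine le_trans ?_ (N.aux_le (s.sup List.length) x)
    refine le_trans (Finset.sum_le_sum fun l hl => ?_) (ENNReal.sum_le_tsum s)
    have := Finset.le_sup (f := List.length) hl
    simp only [if_pos this]
    exact le_rfl

lemma lap_eq (N : RootedNetwork V) (f : V → ℝ) (x : V) :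
    N.lap f x = ∑ y ∈ N.nb x, N.c x y * (f y - f x) :=
  tsum_eq_sum fun y hy => by simp [N.c_zero x y hy]

lemma hit_lap [Infinite V] (N : RootedNetwork V) (x : V) (hx : x ≠ N.o) :
    N.lap (fun y => (N.hitProb y N.o).toReal) x = 0 := by
  have h := congrArg ENNReal.toReal (N.hit_rec x hx)
  rw [p_sum, ENNReal.toReal_sum] at h
  · simp only [ENNReal.toReal_mul, p,
      ENNReal.toReal_ofReal (div_nonneg (N.c_nonneg _ _) (N.cv_nonneg _))] at h
    have hc := N.cv_pos x
    rw [lap_eq]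
    simp only [mul_sub, Finset.sum_sub_distrib]
    rw [← Finset.sum_mul, ← cv_eq, h, Finset.mul_sum, ← Finset.sum_sub_distrib]
    refine Finset.sum_eq_zero fun y _ => ?_
    field_simp
    ring
  · intro y _
    exact ENNReal.mul_ne_top ENNReal.ofReal_ne_top ((N.hit_le y).trans_lt ENNReal.one_lt_top).ne

lemma min_principle (N : RootedNetwork V) (f : V → ℝ) (S : Set V) (hS : S.Finite)
    (hout : ∀ v, v ∉ S → 1 ≤ f v) (ho : 1 ≤ f N.o)
    (hf : ∀ v, v ≠ N.o → N.lap f v = 0) (v : V) : 1 ≤ f v := by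
  by_contra! hv
  have hvS : v ∈ S := by
    by_contra h
    exact absurd (hout v h) (not_le.2 hv)
  obtain ⟨a, haS, ha⟩ := Set.exists_min_image S f hS ⟨v, hvS⟩
  have ha1 : f a < 1 := (ha v hvS).trans_lt hv
  have hmin : ∀ w, f a ≤ f w := fun w => by
    by_cases hw : w ∈ S
    · exact ha w hw
    · exact ha1.le.trans (hout w hw)
  have key : ∀ w, N.G.Reachable a w → f w = f a := by
    intro w hw
    rw [SimpleGraph.reachable_iff_reflTransGen] at hw
    induction hw with
    | refl => rfl
    | @tail b d _ hbd ih =>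
      have hb : b ≠ N.o := by
        rintro rfl
        linarith
      have h0 := hf b hb
      rw [lap_eq, Finset.sum_eq_zero_iff_of_nonneg] at h0
      · have h1 := h0 d ((N.mem_nb b d).2 hbd)
        have h2 := N.c_pos b d hbd
        rcases mul_eq_zero.1 h1 with h3 | h3 <;> linarith
      · intro y _
        refine mul_nonneg (N.c_nonneg _ _) ?_
        have := hmin y
        linarith
  have := key N.o (N.connected.preconnected a N.o)
  linarith

end RootedNetwork

/-- If an infinite rooted network admits a potential tending to infinity, then
it is recurrent. -/
theorem recurrent_of_potential_tendsto_infinity {V : Type*} [Infinite V]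
    (N : RootedNetwork V) (h : V → ℝ) (hpot : N.IsPotential h)
    (htends : ∀ M : ℝ, 0 < M → {v : V | h v ≤ M}.Finite) :
    N.Recurrent := by
  intro x
  obtain ⟨h0, ho, -, hh⟩ := hpot
  refine le_antisymm (N.hit_le x) ?_
  have key : ∀ M : ℝ, 0 < M → 1 ≤ (N.hitProb x N.o).toReal + M⁻¹ * h x := by
    intro M hM
    refine N.min_principle (fun y => (N.hitProb y N.o).toReal + M⁻¹ * h y) _ (htends M hM)
      ?_ ?_ ?_ x
    · intro v hv
      simp only [Set.mem_ofPred_eq, not_le] at hv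
      have h1 : 1 ≤ M⁻¹ * h v := by
        rw [inv_mul_eq_div, le_div_iff₀ hM]; linarith
      have h2 : 0 ≤ (N.hitProb v N.o).toReal := ENNReal.toReal_nonneg
      linarith
    · simp [ho, RootedNetwork.hit_eq]
    · intro v hv
      have h1 := N.hit_lap v hv
      have h2 := hh v hv
      rw [RootedNetwork.lap_eq] at h1 h2 ⊢
      calc _ = ∑ y ∈ N.nb v, N.c v y * ((N.hitProb y N.o).toReal - (N.hitProb v N.o).toReal)
            + M⁻¹ * ∑ y ∈ N.nb v, N.c v y * (h y - h v) := by
              rw [Finset.mul_sum, ← Finset.sum_add_distrib]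
              exact Finset.sum_congr rfl fun y _ => by ring
        _ = 0 := by rw [h1, h2]; simp
  have lim : Tendsto (fun M : ℝ => (N.hitProb x N.o).toReal + M⁻¹ * h x) atTop
      (𝓝 ((N.hitProb x N.o).toReal + 0 * h x)) :=
    tendsto_const_nhds.add (tendsto_inv_atTop_zero.mul_const _)
  have h1 : (1:ℝ) ≤ (N.hitProb x N.o).toReal + 0 * h x :=
    ge_of_tendsto lim ((eventually_gt_atTop 0).mono key)
  rw [zero_mul, add_zero] at h1
  have := ENNReal.ofReal_le_ofReal h1
  rwa [ENNReal.ofReal_one, ENNReal.ofReal_toReal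
    ((N.hit_le x).trans_lt ENNReal.one_lt_top).ne] at this
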